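/- arXiv:2512.14605 — 3 statements merged into one kernel-verified Lean document; each statement's English description precedes it below -/
import Mathlib

section
/- For every odd natural number k, the derivation D_1 commutes with D_k: for every polynomial P in R one has D_1(D_k(P)) = D_k(D_1(P)) (equivalently, [D_1, D_k] = 0). -/
open MvPolynomial Finset

noncomputable section

/-- The polynomial ring `R = ℂ[b_{i,2j-1} : i ∈ {1,2,3}, j ≥ 1]`. -/
abbrev R : Type := MvPolynomial (Fin 3 × ℕ+) ℂ

/-- `b i j` denotes the variable `b_{i+1, j}`, intended for odd `j ≥ 1`;
the variable `b_{i+1, 2m-1}` is `X (i, m)`. -/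
def b (i : Fin 3) (j : ℕ) : R := MvPolynomial.X (i, ⟨j / 2 + 1, Nat.succ_pos _⟩)

/-- The derivation `D_1`, determined by its values on the variables. -/
def D1 : Derivation ℂ R R :=
  MvPolynomial.mkDerivation ℂ fun p =>
    let j : ℕ := 2 * (p.2 : ℕ) - 1
    if p.1 = 0 then b 1 j
    else if p.1 = 1 then b 2 j
    else 4 * (2 * b 0 1 * b 1 j + b 1 1 * b 0 j + b 1 (j + 2))

/-- The value of `D_k` on the variable `b_{1,j}` (for odd `k`, `j`). -/
def DB1 (k j : ℕ) : R :=
  b 1 (j + k - 1) + ∑ s ∈ Finset.Icc 1 ((k - 1) / 2),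
    (b 1 (2 * s - 1) * b 0 (j + k - 2 * s - 1) - b 0 (2 * s - 1) * b 1 (j + k - 2 * s - 1))

/-- The derivation `D_k` (intended for odd `k`), determined by
`D_k(b_{1,j}) = DB1 k j`, `D_k(b_{2,j}) = D_1(D_k(b_{1,j}))`, `D_k(b_{3,j}) = D_1(D_k(b_{2,j}))`. -/
def D (k : ℕ) : Derivation ℂ R R :=
  MvPolynomial.mkDerivation ℂ fun p =>
    let j : ℕ := 2 * (p.2 : ℕ) - 1
    if p.1 = 0 then DB1 k j
    else if p.1 = 1 then D1 (DB1 k j)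
    else D1 (D1 (DB1 k j))

end

/-!
Write `f' = D₁ f`, `u_m = b_{1,2m+1}` and `q = u_0`. The relations defining `D₁` say that
`L u_m = 4 u_{m+1}'` for the Lenard operator `L f = f''' - 4 (2 f' q + f q')`. Regard `f` as the
vector field `f ∂` and `q` as a quadratic differential: `ℒ_f q = 2 f' q + f q'` is a Lie
derivative, the Wronskian `W(f, g) = f g' - f' g` is the Lie bracket, and `L` is the infinitesimal
action on `q` of the Virasoro coadjoint representation, whence
`L (W(f, g)) = ℒ_f (L g) - ℒ_g (L f)`. For `f = u_a` and `g = u_c` this makes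
`L (W(u_a, u_c)) - 4 W(u_{a+1}, u_c)'` a difference that telescopes along `a + c` constant, and so
`v_m = D_{2n+1} u_m` satisfies the linearization `L v_m - 4 ℒ_{u_m} v_0 = 4 v_{m+1}'` of the
recursion. This is exactly the compatibility `D_{2n+1} (u_m''') = (D_{2n+1} u_m)'''`, the only case
of commutation on generators that is not part of the definition of `D_{2n+1}`.
-/

noncomputable section

lemma derivation_ofNat {S A M : Type*} [CommSemiring S] [CommSemiring A] [AddCommMonoid M]
    [Algebra S A] [Module A M] [Module S M] (d : Derivation S A M)
    (n : ℕ) [n.AtLeastTwo] : d (ofNat(n) : A) = 0 :=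
  d.map_natCast n

section Lenard

variable {S A : Type*} [CommSemiring S] [CommRing A] [Algebra S A] (d : Derivation S A A)

/-- The Wronskian `f g' - f' g` with respect to a derivation, which is the coefficient of the Lie
bracket of the vector fields `f ∂` and `g ∂`. -/
def wronskian (f g : A) : A := f * d g - d f * g

/-- The coefficient `2 f' q + f q'` of the Lie derivative of the quadratic differential `q (dx)²`
along the vector field `f ∂`. -/
def quadLieDeriv (f q : A) : A := 2 * d f * q + f * d q

/-- The Lenard operator `f ↦ f''' - 4 (2 f' q + f q')` with potential `q`, which generates the KdV
hierarchy; additivity is bundled so that it can be applied to sums. -/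
def lenard (q : A) : A →+ A :=
  AddMonoidHom.mk' (fun f => d (d (d f)) - 4 * quadLieDeriv d f q) fun f g => by
    simp only [quadLieDeriv, map_add]
    ring

lemma lenard_apply (q f : A) : lenard d q f = d (d (d f)) - 4 * quadLieDeriv d f q := rfl

lemma derivation_wronskian (f g : A) :
    d (wronskian d f g) = quadLieDeriv d f (d g) - quadLieDeriv d g (d f) := by
  simp only [wronskian, quadLieDeriv, map_sub, Derivation.leibniz, smul_eq_mul]
  ring

lemma lenard_wronskian (q f g : A) :
    lenard d q (wronskian d f g) =
      quadLieDeriv d f (lenard d q g) - quadLieDeriv d g (lenard d q f) := by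
  simp only [lenard_apply, wronskian, quadLieDeriv, map_sub, map_add, Derivation.leibniz,
    smul_eq_mul, derivation_ofNat]
  ring

lemma lenard_derivation (q f : A) :
    lenard d q (d f) = d (lenard d q f) + 4 * quadLieDeriv d f (d q) := by
  simp only [lenard_apply, quadLieDeriv, map_sub, map_add, Derivation.leibniz, smul_eq_mul,
    derivation_ofNat]
  ring

lemma sum_wronskian_reflect_eq_zero (u : ℕ → A) (n : ℕ) :
    ∑ s ∈ range n, wronskian d (u (n - 1 - s)) (u s) = 0 := by
  simp only [wronskian, sum_sub_distrib, sub_eq_zero]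
  rw [← sum_range_reflect]
  refine sum_congr rfl fun s hs => ?_
  rw [Nat.sub_sub_self (Nat.le_sub_one_of_lt (mem_range.1 hs)), mul_comm]

/-- The right-hand side `u_{m+n}' + ∑_{s < n} W(u_{m+n-1-s}, u_s)` of the `n`-th flow of the
hierarchy at `u_m`; with `u_m = b_{1,2m+1}` it is the value of `D_{2n+1}` on `b_{1,2m+1}`. -/
def lenardFlow (u : ℕ → A) (n m : ℕ) : A :=
  d (u (m + n)) + ∑ s ∈ range n, wronskian d (u (m + n - 1 - s)) (u s)

lemma lenardFlow_zero_left (u : ℕ → A) (m : ℕ) : lenardFlow d u 0 m = d (u m) := by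
  simp [lenardFlow]

lemma lenardFlow_zero_right (u : ℕ → A) (n : ℕ) : lenardFlow d u n 0 = d (u n) := by
  simp [lenardFlow, sum_wronskian_reflect_eq_zero]

/-- The Lenard recursion `L u_m = 4 u_{m+1}'`, with the first term `u_0` as the potential. -/
def IsLenardSequence (u : ℕ → A) : Prop :=
  ∀ m, lenard d (u 0) (u m) = 4 * d (u (m + 1))

namespace IsLenardSequence

variable {d} {u : ℕ → A} (hu : IsLenardSequence d u)
include hu

lemma lenard_wronskian (a c : ℕ) :
    lenard d (u 0) (wronskian d (u a) (u c)) =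
      4 * (d (wronskian d (u (a + 1)) (u c)) +
        (quadLieDeriv d (u a) (d (u (c + 1))) - quadLieDeriv d (u (a + 1)) (d (u c)))) := by
  rw [_root_.lenard_wronskian, hu, hu, derivation_wronskian]
  simp only [quadLieDeriv, Derivation.leibniz, smul_eq_mul, derivation_ofNat]
  ring

lemma lenard_sum_wronskian (n m : ℕ) :
    lenard d (u 0) (∑ s ∈ range n, wronskian d (u (m + n - 1 - s)) (u s)) =
      4 * (d (∑ s ∈ range n, wronskian d (u (m + 1 + n - 1 - s)) (u s)) +
        (quadLieDeriv d (u m) (d (u n)) - quadLieDeriv d (u (m + n)) (d (u 0)))) := by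
  have telescope := sum_range_sub (fun s => quadLieDeriv d (u (m + n - s)) (d (u s))) n
  rw [Nat.add_sub_cancel, Nat.sub_zero] at telescope
  rw [← telescope, map_sum, map_sum, ← sum_add_distrib, mul_sum]
  refine sum_congr rfl fun s hs => ?_
  have hs := mem_range.1 hs
  rw [hu.lenard_wronskian, show m + n - 1 - s + 1 = m + n - s by lia,
    show m + 1 + n - 1 - s = m + n - s by lia, show m + n - (s + 1) = m + n - 1 - s by lia]

lemma lenard_lenardFlow (n m : ℕ) :
    lenard d (u 0) (lenardFlow d u n m) =
      4 * (quadLieDeriv d (u m) (lenardFlow d u n 0) + d (lenardFlow d u n (m + 1))) := by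
  have lenard_head : lenard d (u 0) (d (u (m + n))) =
      4 * (d (d (u (m + 1 + n))) + quadLieDeriv d (u (m + n)) (d (u 0))) := by
    rw [lenard_derivation, hu, Derivation.leibniz, derivation_ofNat, Nat.add_right_comm]
    simp only [smul_eq_mul]
    ring
  rw [lenardFlow_zero_right, lenardFlow, lenardFlow, map_add, lenard_head,
    hu.lenard_sum_wronskian, map_add]
  ring

end IsLenardSequence

lemma derivation_quadLieDeriv_of_comm {d E : Derivation S A A} {f : A}
    (hf : E (d f) = d (E f)) {q : A} (hq : E (d q) = d (E q)) :
    E (quadLieDeriv d f q) = quadLieDeriv d (E f) q + quadLieDeriv d f (E q) := by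
  simp only [quadLieDeriv, map_add, Derivation.leibniz, smul_eq_mul, derivation_ofNat, hf, hq]
  ring

lemma IsLenardSequence.comm_third_derivative {d : Derivation S A A} {u : ℕ → A}
    (hu : IsLenardSequence d u) {E : Derivation S A A} {n : ℕ}
    (hE : ∀ m, E (u m) = lenardFlow d u n m) (hcomm : ∀ m, E (d (u m)) = d (E (u m))) (m : ℕ) :
    E (d (d (d (u m)))) = d (d (d (E (u m)))) := by
  have recursion : d (d (d (u m))) =
      4 * (quadLieDeriv d (u m) (u 0) + d (u (m + 1))) := by
    linear_combination hu m - lenard_apply d (u 0) (u m)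
  have linearized : d (d (d (E (u m)))) =
      4 * (quadLieDeriv d (E (u m)) (u 0) + quadLieDeriv d (u m) (E (u 0)) +
        d (E (u (m + 1)))) := by
    simp only [hE]
    linear_combination hu.lenard_lenardFlow n m - lenard_apply d (u 0) (lenardFlow d u n m)
  rw [recursion, linearized, Derivation.leibniz, derivation_ofNat, map_add,
    derivation_quadLieDeriv_of_comm (hcomm m) (hcomm 0), hcomm, smul_zero, add_zero, smul_eq_mul]

end Lenard

/-- The variables `b_{1,2m+1}`, indexed by `m : ℕ`. All other variables are their first and
second `D1`-derivatives. -/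
def b₁ (m : ℕ) : R := b 0 (2 * m + 1)

lemma b_odd_eq_X (i : Fin 3) (m : ℕ) : b i (2 * m + 1) = X (i, m.succPNat) := by
  rw [b]
  congr 3
  lia

lemma D1_b₁ (m : ℕ) : D1 (b₁ m) = b 1 (2 * m + 1) := by
  rw [b₁, b_odd_eq_X, D1, mkDerivation_X]
  simp [mul_add_one]

lemma D1_D1_b₁ (m : ℕ) : D1 (D1 (b₁ m)) = b 2 (2 * m + 1) := by
  rw [D1_b₁, b_odd_eq_X, D1, mkDerivation_X]
  simp [mul_add_one]

lemma isLenardSequence_b₁ : IsLenardSequence D1 b₁ := by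
  intro m
  have third_derivative : D1 (D1 (D1 (b₁ m))) =
      4 * (2 * b₁ 0 * D1 (b₁ m) + D1 (b₁ 0) * b₁ m + D1 (b₁ (m + 1))) := by
    rw [D1_D1_b₁, D1_b₁, D1_b₁, D1_b₁, b_odd_eq_X, D1, mkDerivation_X]
    simp [mul_add, b₁]
  rw [lenard_apply, third_derivative, quadLieDeriv]
  ring

lemma derivation_ext_b₁ {M : Type*} [AddCommMonoid M] [Module R M] [Module ℂ M]
    {E F : Derivation ℂ R M} (h₀ : ∀ m, E (b₁ m) = F (b₁ m))
    (h₁ : ∀ m, E (D1 (b₁ m)) = F (D1 (b₁ m)))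
    (h₂ : ∀ m, E (D1 (D1 (b₁ m))) = F (D1 (D1 (b₁ m)))) : E = F := by
  refine derivation_ext fun ⟨i, j⟩ => ?_
  obtain ⟨m, rfl⟩ : ∃ m : ℕ, m.succPNat = j := ⟨j.natPred, j.succPNat_natPred⟩
  rw [← b_odd_eq_X]
  fin_cases i
  · exact h₀ m
  · exact D1_b₁ m ▸ h₁ m
  · exact D1_D1_b₁ m ▸ h₂ m

lemma D_b₁ (k m : ℕ) : D k (b₁ m) = DB1 k (2 * m + 1) := by
  rw [b₁, b_odd_eq_X, D, mkDerivation_X]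
  simp [mul_add_one]

lemma D_D1_b₁ (k m : ℕ) : D k (D1 (b₁ m)) = D1 (D k (b₁ m)) := by
  rw [D_b₁, D1_b₁, b_odd_eq_X, D, mkDerivation_X]
  simp [mul_add_one]

lemma D_D1_D1_b₁ (k m : ℕ) : D k (D1 (D1 (b₁ m))) = D1 (D1 (D k (b₁ m))) := by
  rw [D_b₁, D1_D1_b₁, b_odd_eq_X, D, mkDerivation_X]
  simp [mul_add_one]

lemma DB1_odd (n m : ℕ) : DB1 (2 * n + 1) (2 * m + 1) = lenardFlow D1 b₁ n m := by
  rw [DB1, lenardFlow, D1_b₁, show 2 * m + 1 + (2 * n + 1) - 1 = 2 * (m + n) + 1 by lia,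
    show (2 * n + 1 - 1) / 2 = n by lia, range_eq_Ico, ← Ico_add_one_right_eq_Icc,
    ← sum_Ico_add' _ 0 n 1]
  refine congrArg _ (sum_congr rfl fun s hs => ?_)
  have hs := (mem_Ico.1 hs).2
  rw [wronskian, D1_b₁, D1_b₁, b₁, b₁, show 2 * (s + 1) - 1 = 2 * s + 1 by lia,
    show 2 * m + 1 + (2 * n + 1) - 2 * (s + 1) - 1 = 2 * (m + n - 1 - s) + 1 by lia]
  ring

lemma D_odd_b₁ (n m : ℕ) : D (2 * n + 1) (b₁ m) = lenardFlow D1 b₁ n m := by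
  rw [D_b₁, DB1_odd]

lemma D_one : D 1 = D1 := by
  have D_one_b₁ (m : ℕ) : D 1 (b₁ m) = D1 (b₁ m) :=
    (D_odd_b₁ 0 m).trans (lenardFlow_zero_left D1 b₁ m)
  refine derivation_ext_b₁ D_one_b₁ (fun m => ?_) fun m => ?_
  · rw [D_D1_b₁, D_one_b₁]
  · rw [D_D1_D1_b₁, D_one_b₁]

lemma commutator_D1_D_odd (n : ℕ) : ⁅D1, D (2 * n + 1)⁆ = 0 := by
  refine derivation_ext_b₁ (fun m => ?_) (fun m => ?_) fun m => ?_ <;>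
    rw [Derivation.commutator_apply, Derivation.zero_apply, sub_eq_zero]
  · rw [D_D1_b₁]
  · rw [D_D1_b₁, D_D1_D1_b₁]
  · rw [D_D1_D1_b₁,
      isLenardSequence_b₁.comm_third_derivative (D_odd_b₁ n) (D_D1_b₁ (2 * n + 1))]

end

/-- For every odd natural number `k`, the derivation `D_1` commutes with `D_k`. -/
theorem commute_D1_Dk (k : ℕ) (hk : Odd k) :
    ∀ P : R, D 1 (D k P) = D k (D 1 P) := by
  obtain ⟨n, rfl⟩ := hk
  intro P
  rw [D_one, ← sub_eq_zero, ← Derivation.commutator_apply, commutator_D1_D_odd,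
    Derivation.zero_apply]
end

section
/- For all odd natural numbers k and j, the following explicit formula holds: D_k(b_{2,j}) = b_{3,j+k-1} + Σ_{s=1}^{(k-1)/2} (b_{3,2s-1} b_{1,j+k-2s-1} − b_{1,2s-1} b_{3,j+k-2s-1}). -/
open MvPolynomial Finset

/-! Since `D_1 b_{1,j} = b_{2,j}`, each summand of `D_k b_{1,j}` is a Wronskian `∂x * y - x * ∂y`
for `∂ = D_1`. Its derivative is `∂²x * y - x * ∂²y`, because the two terms `∂x * ∂y` cancel; as
`D_1 b_{2,j} = b_{3,j}`, applying `D_1` termwise to `D_k b_{1,j}` gives the formula. -/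

theorem derivation_apply_wronskian {S A : Type*} [CommSemiring S] [CommRing A]
    [Algebra S A] (d : Derivation S A A) (x y : A) :
    d (d x * y - x * d y) = d (d x) * y - x * d (d y) := by
  simp only [map_sub, Derivation.leibniz, smul_eq_mul]
  ring

-- `b` rounds an even index up to the next odd one.
theorem b_two_mul_half_add_one_sub_one (i : Fin 3) (j : ℕ) :
    b i (2 * (j / 2 + 1) - 1) = b i j := by
  have half_eq : (2 * (j / 2 + 1) - 1) / 2 = j / 2 := by lia
  simp only [b, half_eq]

theorem D1_b_zero (j : ℕ) : D1 (b 0 j) = b 1 j :=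
  (mkDerivation_X ℂ _ _).trans (b_two_mul_half_add_one_sub_one 1 j)

theorem D1_b_one (j : ℕ) : D1 (b 1 j) = b 2 j :=
  (mkDerivation_X ℂ _ _).trans (b_two_mul_half_add_one_sub_one 2 j)

theorem D_b_zero (k j : ℕ) : D k (b 0 j) = DB1 k (2 * (j / 2 + 1) - 1) :=
  mkDerivation_X ℂ _ _

theorem D_b_zero_of_odd (k : ℕ) {j : ℕ} (hj : Odd j) : D k (b 0 j) = DB1 k j := by
  have index_eq : 2 * (j / 2 + 1) - 1 = j := by grind
  rw [D_b_zero, index_eq]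

theorem D_b_one (k j : ℕ) : D k (b 1 j) = D1 (D k (b 0 j)) := by
  rw [D_b_zero]
  exact mkDerivation_X ℂ _ _

theorem D1_b_wronskian (m n : ℕ) :
    D1 (b 1 m * b 0 n - b 0 m * b 1 n) = b 2 m * b 0 n - b 0 m * b 2 n := by
  simpa only [D1_b_zero, D1_b_one] using derivation_apply_wronskian D1 (b 0 m) (b 0 n)

/-- explicit formula for `D_k(b_{2,j})` for odd `k`, `j`. -/
theorem Dk_b2j (k j : ℕ) (hk : Odd k) (hj : Odd j) :
    D k (b 1 j) = b 2 (j + k - 1)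
      + ∑ s ∈ Finset.Icc 1 ((k - 1) / 2),
          (b 2 (2 * s - 1) * b 0 (j + k - 2 * s - 1)
            - b 0 (2 * s - 1) * b 2 (j + k - 2 * s - 1)) := by
  rw [D_b_one, D_b_zero_of_odd k hj, DB1, map_add, map_sum, D1_b_one]
  simp only [D1_b_wronskian]
end

section
/- For odd natural numbers j, k, l define F(k,l) ∈ R by F(k,l) = Σ_{s=1}^{(k-1)/2} b_{2,j+k-2s-1} Σ_{n=1}^{(l-1)/2} b_{1,2n-1} b_{2,2s+l-2n-2} − Σ_{s=1}^{(k-1)/2} b_{2,j+k-2s-1} Σ_{n=1}^{(l-1)/2} b_{2,2n-1} b_{1,2s+l-2n-2} − Σ_{s=1}^{(k-1)/2} b_{2,2s-1} Σ_{n=1}^{(l-1)/2} b_{1,2n-1} b_{2,j+k+l-2s-2n-2}. Then F(k,l) = F(l,k) for all odd k, l. -/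
open MvPolynomial Finset

noncomputable section

/-- The expression `F(k,l)` (for a fixed odd `j`) from STATEMENT 13. -/
def F (j k l : ℕ) : R :=
  ∑ s ∈ Finset.Icc 1 ((k - 1) / 2), b 1 (j + k - 2 * s - 1)
      * ∑ n ∈ Finset.Icc 1 ((l - 1) / 2), b 0 (2 * n - 1) * b 1 (2 * s + l - 2 * n - 2)
  - ∑ s ∈ Finset.Icc 1 ((k - 1) / 2), b 1 (j + k - 2 * s - 1)
      * ∑ n ∈ Finset.Icc 1 ((l - 1) / 2), b 1 (2 * n - 1) * b 0 (2 * s + l - 2 * n - 2)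
  - ∑ s ∈ Finset.Icc 1 ((k - 1) / 2), b 1 (2 * s - 1)
      * ∑ n ∈ Finset.Icc 1 ((l - 1) / 2), b 0 (2 * n - 1) * b 1 (j + k + l - 2 * s - 2 * n - 2)

end

/-!
Up to reindexing, each of the three double sums in `F(k, l)`, with `k = 2K + 1` and `l = 2L + 1`,
runs over the triples `u + v + w + 2 = K + L` of a rectangle: `u < K, v < L`, then `u < K, w < L`,
then `w < K, v < L`. On these triples at least one of the two bounds of a rectangle holds, so
`[u < K][v < L] = [u < K] + [v < L] - 1`, and likewise for the other two. In the alternating sum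
everything but `1 - [w < K] - [w < L]` cancels, and this is symmetric in `K` and `L`.
-/

section Triples

variable {M : Type*}

/-- The finite set of triples `(u, v, w)` with `u + v + w + 2 = N`, the index set common to the
double sums in `F`. The shift by `2` makes it empty for `N < 2`. -/
def shiftedTriples (N : ℕ) : Finset (ℕ × ℕ × ℕ) :=
  {p ∈ range N ×ˢ range N ×ˢ range N | p.1 + p.2.1 + p.2.2 + 2 = N}

theorem mem_shiftedTriples {N : ℕ} {p : ℕ × ℕ × ℕ} :
    p ∈ shiftedTriples N ↔ p.1 + p.2.1 + p.2.2 + 2 = N := by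
  simp only [shiftedTriples, mem_filter, mem_product, mem_range]
  omega

theorem sum_shiftedTriples_swap_right [AddCommMonoid M] (f : ℕ → ℕ → ℕ → M) (N : ℕ) :
    ∑ p ∈ shiftedTriples N, f p.1 p.2.2 p.2.1 = ∑ p ∈ shiftedTriples N, f p.1 p.2.1 p.2.2 :=
  sum_equiv ((Equiv.refl ℕ).prodCongr (Equiv.prodComm ℕ ℕ))
    (by simp [mem_shiftedTriples, add_right_comm]) (by simp)

theorem sum_shiftedTriples_reverse [AddCommMonoid M] (f : ℕ → ℕ → ℕ → M) (N : ℕ) :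
    ∑ p ∈ shiftedTriples N, f p.2.2 p.2.1 p.1 = ∑ p ∈ shiftedTriples N, f p.1 p.2.1 p.2.2 := by
  refine sum_nbij' (fun p ↦ (p.2.2, p.2.1, p.1)) (fun p ↦ (p.2.2, p.2.1, p.1)) ?_ ?_ ?_ ?_ ?_ <;>
    simp only [mem_shiftedTriples, implies_true] <;> omega

theorem sum_range_sum_range_eq_sum_shiftedTriples [AddCommMonoid M] (f : ℕ → ℕ → ℕ → M)
    (K L : ℕ) :
    ∑ u ∈ range K, ∑ v ∈ range L, f u v (K + L - 2 - u - v) =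
      ∑ p ∈ shiftedTriples (K + L),
        if p.1 < K ∧ p.2.1 < L then f p.1 p.2.1 p.2.2 else 0 := by
  rw [← sum_product', ← sum_filter]
  refine sum_nbij' (fun q ↦ (q.1, q.2, K + L - 2 - q.1 - q.2)) (fun p ↦ (p.1, p.2.1))
    ?_ ?_ ?_ ?_ fun _ _ ↦ rfl <;>
    simp only [mem_product, mem_filter, mem_range, mem_shiftedTriples, Prod.ext_iff,
      implies_true, true_and, and_imp] <;> omega

theorem ite_and_eq_add_sub_of_or [AddCommGroup M] {P Q : Prop} [Decidable P] [Decidable Q]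
    (h : P ∨ Q) (x : M) :
    (if P ∧ Q then x else 0) = (if P then x else 0) + (if Q then x else 0) - x := by
  by_cases hP : P <;> by_cases hQ : Q <;> simp_all

variable [AddCommGroup M] (f : ℕ → ℕ → ℕ → M) (K L : ℕ)

/-- The expression `F(2K + 1, 2L + 1)`, with each monomial
`b_{2,j+2u} b_{1,2v+1} b_{2,2w+1}` replaced by an arbitrary value `f u v w`. In each double sum
the remaining index is determined by `u + v + w + 2 = K + L`. -/
def rectangleSum : M :=
  ∑ u ∈ range K, ∑ v ∈ range L, f u v (K + L - 2 - u - v)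
  - ∑ u ∈ range K, ∑ w ∈ range L, f u (K + L - 2 - u - w) w
  - ∑ w ∈ range K, ∑ v ∈ range L, f (K + L - 2 - w - v) v w

theorem rectangleSum_eq_sum_shiftedTriples :
    rectangleSum f K L = ∑ p ∈ shiftedTriples (K + L),
      ((if p.1 < K ∧ p.2.1 < L then f p.1 p.2.1 p.2.2 else 0)
        - (if p.1 < K ∧ p.2.2 < L then f p.1 p.2.1 p.2.2 else 0)
        - (if p.2.2 < K ∧ p.2.1 < L then f p.1 p.2.1 p.2.2 else 0)) := by
  rw [rectangleSum, sum_range_sum_range_eq_sum_shiftedTriples f,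
    sum_range_sum_range_eq_sum_shiftedTriples fun u w v ↦ f u v w,
    sum_range_sum_range_eq_sum_shiftedTriples fun w v u ↦ f u v w,
    sum_shiftedTriples_swap_right fun u v w ↦ if u < K ∧ w < L then f u v w else 0,
    sum_shiftedTriples_reverse fun u v w ↦ if w < K ∧ v < L then f u v w else 0,
    sum_sub_distrib, sum_sub_distrib]

theorem rectangleSum_eq_sum_sub_ite :
    rectangleSum f K L = ∑ p ∈ shiftedTriples (K + L),
      (f p.1 p.2.1 p.2.2 - (if p.2.2 < K then f p.1 p.2.1 p.2.2 else 0)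
        - (if p.2.2 < L then f p.1 p.2.1 p.2.2 else 0)) := by
  rw [rectangleSum_eq_sum_shiftedTriples]
  refine sum_congr rfl fun p hp ↦ ?_
  rw [mem_shiftedTriples] at hp
  have huv : p.1 < K ∨ p.2.1 < L := by omega
  have huw : p.1 < K ∨ p.2.2 < L := by omega
  have hwv : p.2.2 < K ∨ p.2.1 < L := by omega
  rw [ite_and_eq_add_sub_of_or huv, ite_and_eq_add_sub_of_or huw, ite_and_eq_add_sub_of_or hwv]
  abel

theorem F_symm_general : rectangleSum f K L = rectangleSum f L K := by
  rw [rectangleSum_eq_sum_sub_ite, rectangleSum_eq_sum_sub_ite, add_comm L K]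
  exact sum_congr rfl fun p _ ↦ sub_right_comm ..

end Triples

theorem sum_Icc_one_eq_sum_range {M : Type*} [AddCommMonoid M] (f : ℕ → M) (n : ℕ) :
    ∑ i ∈ Icc 1 n, f i = ∑ i ∈ range n, f (i + 1) := by
  rw [← Ico_add_one_right_eq_Icc, sum_Ico_eq_sum_range, add_tsub_cancel_right]
  simp only [add_comm 1]

theorem sum_Icc_one_eq_sum_range_reflect {M : Type*} [AddCommMonoid M] (f : ℕ → M) (n : ℕ) :
    ∑ i ∈ Icc 1 n, f i = ∑ i ∈ range n, f (n - i) := by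
  rw [sum_Icc_one_eq_sum_range, ← sum_range_reflect]
  refine sum_congr rfl fun i hi ↦ congrArg f ?_
  have := mem_range.mp hi
  omega

theorem F_two_mul_add_one (J K L : ℕ) :
    F (2 * J + 1) (2 * K + 1) (2 * L + 1) =
      rectangleSum
        (fun u v w ↦ b 1 (2 * J + 1 + 2 * u) * b 0 (2 * v + 1) * b 1 (2 * w + 1)) K L := by
  have half (n : ℕ) : (2 * n + 1 - 1) / 2 = n := by omega
  have pred (n : ℕ) : 2 * (n + 1) - 1 = 2 * n + 1 := by omega
  simp only [F, rectangleSum, half, mul_sum]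
  refine congrArg₂ _ (congrArg₂ _ ?_ ?_) ?_
  · simp only [sum_Icc_one_eq_sum_range_reflect _ K, sum_Icc_one_eq_sum_range _ L, pred]
    refine sum_congr rfl fun u hu ↦ sum_congr rfl fun v hv ↦ ?_
    rw [mem_range] at hu hv
    have index_u : 2 * J + 1 + (2 * K + 1) - 2 * (K - u) - 1 = 2 * J + 1 + 2 * u := by omega
    have index_w : 2 * (K - u) + (2 * L + 1) - 2 * (v + 1) - 2 = 2 * (K + L - 2 - u - v) + 1 := by
      omega
    rw [index_u, index_w, mul_assoc]
  · simp only [sum_Icc_one_eq_sum_range_reflect _ K, sum_Icc_one_eq_sum_range _ L, pred]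
    refine sum_congr rfl fun u hu ↦ sum_congr rfl fun w hw ↦ ?_
    rw [mem_range] at hu hw
    have index_u : 2 * J + 1 + (2 * K + 1) - 2 * (K - u) - 1 = 2 * J + 1 + 2 * u := by omega
    have index_v : 2 * (K - u) + (2 * L + 1) - 2 * (w + 1) - 2 = 2 * (K + L - 2 - u - w) + 1 := by
      omega
    rw [index_u, index_v, ← mul_assoc, mul_right_comm]
  · simp only [sum_Icc_one_eq_sum_range, pred]
    refine sum_congr rfl fun w hw ↦ sum_congr rfl fun v hv ↦ ?_
    rw [mem_range] at hw hv
    have index_u : 2 * J + 1 + (2 * K + 1) + (2 * L + 1) - 2 * (w + 1) - 2 * (v + 1) - 2 =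
        2 * J + 1 + 2 * (K + L - 2 - w - v) := by omega
    rw [index_u]
    ring

/-- `F(k,l) = F(l,k)` for all odd `j`, `k`, `l`. -/
theorem F_symm (j k l : ℕ) (hj : Odd j) (hk : Odd k) (hl : Odd l) :
    F j k l = F j l k := by
  rcases hj, hk, hl with ⟨⟨J, rfl⟩, ⟨K, rfl⟩, ⟨L, rfl⟩⟩
  rw [F_two_mul_add_one, F_two_mul_add_one, F_symm_general]
end
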